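/- Let S be a smooth cubic surface in P^3 over a field K. If S contains a K-rational line, then H^0_S(K) = H_S(K)[2], the 2-torsion subgroup of H_S(K). -/

import Mathlib

/- Common framework: points, lines, intersection divisors, the secant-tangent span,
the groups `H_S(K)`, geometric notions over the algebraic closure, and topologies. -/

open MvPolynomial

noncomputable section

namespace CubicSurf

variable {K L : Type*} [Field K] [Field L] {n : ℕ}

/-- The set of `K`-rational points of the projective hypersurface `F = 0`. -/
def zeroSet (F : MvPolynomial (Fin n) K) : Set (Projectivization K (Fin n → K)) :=
  {P | eval P.rep F = 0}

/-- The binary form obtained by restricting `F` to the line spanned by `u` and `v`,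
via the parametrization `(s : t) ↦ s • u + t • v`. -/
def lineRestrict (F : MvPolynomial (Fin n) K) (u v : Fin n → K) : MvPolynomial (Fin 2) K :=
  aeval (fun i => C (u i) * X 0 + C (v i) * X 1) F

/-- A projective line: a 2-dimensional linear subspace of `K^n`. -/
def IsLine (W : Submodule K (Fin n → K)) : Prop := Module.finrank K W = 2

/-- The line `W` lies (geometrically) on the hypersurface `F = 0`. -/
def LineOnSurf (F : MvPolynomial (Fin n) K) (W : Submodule K (Fin n → K)) : Prop :=
  ∀ u v : Fin n → K, u ∈ W → v ∈ W → lineRestrict F u v = 0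

/-- The projective point `P` lies on the line `W`. -/
def OnLine (W : Submodule K (Fin n → K)) (P : Projectivization K (Fin n → K)) : Prop :=
  P.rep ∈ W

/-- The set of `K`-points of the line `W`. -/
def linePts (W : Submodule K (Fin n → K)) : Set (Projectivization K (Fin n → K)) :=
  {P | OnLine W P}

/-- `ℓ · S = P + Q + R`: the intersection divisor (with multiplicities) of the line `W`
with the hypersurface `F = 0` is `P + Q + R`. -/
def MeetsIn (F : MvPolynomial (Fin n) K) (W : Submodule K (Fin n → K))
    (P Q R : Projectivization K (Fin n → K)) : Prop :=
  ∃ (u v : Fin n → K) (_ : u ∈ W) (_ : v ∈ W) (_ : LinearIndependent K ![u, v])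
    (c : K) (l m : Fin 3 → K) (h : ∀ k, l k • u + m k • v ≠ 0),
      c ≠ 0 ∧
      lineRestrict F u v = C c * ∏ k : Fin 3, (C (m k) * X 0 - C (l k) * X 1) ∧
      Projectivization.mk K _ (h 0) = P ∧
      Projectivization.mk K _ (h 1) = Q ∧
      Projectivization.mk K _ (h 2) = R

/-- Membership in the span of a set of points under the secant/tangent process:
the smallest subset of `S(K)` containing `B` such that whenever `P`, `Q` are in it and a
`K`-line `ℓ ⊄ S` satisfies `ℓ·S = P+Q+R` with `R ∈ S(K)`, then `R` is in it. -/
inductive SpanMem (F : MvPolynomial (Fin n) K) (B : Set (Projectivization K (Fin n → K))) :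
    Projectivization K (Fin n → K) → Prop
  | base (P : Projectivization K (Fin n → K)) (hP : P ∈ B) : SpanMem F B P
  | secant (P Q R : Projectivization K (Fin n → K)) (W : Submodule K (Fin n → K))
      (hW : IsLine W) (hWS : ¬ LineOnSurf F W) (hP : SpanMem F B P) (hQ : SpanMem F B Q)
      (hR : R ∈ zeroSet F) (hm : MeetsIn F W P Q R) : SpanMem F B R

/-- The span of a set of points under the secant/tangent process. -/
def Span (F : MvPolynomial (Fin n) K) (B : Set (Projectivization K (Fin n → K))) :
    Set (Projectivization K (Fin n → K)) :=
  {P | SpanMem F B P}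

/-- Smoothness of the projective hypersurface `F = 0`: over the algebraic closure there is
no nonzero common zero of `F` and all of its partial derivatives. -/
def IsSmoothHypersurf (F : MvPolynomial (Fin n) K) : Prop :=
  ∀ v : Fin n → AlgebraicClosure K,
    eval v (MvPolynomial.map (algebraMap K (AlgebraicClosure K)) F) = 0 →
    (∀ i, eval v (pderiv i (MvPolynomial.map (algebraMap K (AlgebraicClosure K)) F)) = 0) →
    v = 0

/-- A smooth cubic hypersurface. -/
def SmoothCubic (F : MvPolynomial (Fin n) K) : Prop :=
  F.IsHomogeneous 3 ∧ IsSmoothHypersurf F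

/-- The linear form cutting out the tangent plane `Π_P` of `F = 0` at `P`,
evaluated at the representative of a point `Q`; `Q ∈ Π_P` iff this vanishes. -/
def tangentEval (F : MvPolynomial (Fin n) K) (P Q : Projectivization K (Fin n → K)) : K :=
  ∑ i, eval P.rep (pderiv i F) * Q.rep i

/-- The set of `K`-points of the tangent plane `Π_P`. -/
def tangentPlanePts (F : MvPolynomial (Fin n) K) (P : Projectivization K (Fin n → K)) :
    Set (Projectivization K (Fin n → K)) :=
  {Q | tangentEval F P Q = 0}

/-- The set of `K`-points of `Γ_P = S ∩ Π_P`. -/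
def GammaPts (F : MvPolynomial (Fin n) K) (P : Projectivization K (Fin n → K)) :
    Set (Projectivization K (Fin n → K)) :=
  zeroSet F ∩ tangentPlanePts F P

/-! ### Base change along a field embedding -/

/-- Base change of a vector along a field embedding. -/
def clVec (φ : K →+* L) (v : Fin n → K) : Fin n → L := fun i => φ (v i)

lemma clVec_ne_zero (φ : K →+* L) {v : Fin n → K} (hv : v ≠ 0) : clVec φ v ≠ 0 := by
  intro h
  apply hv
  funext i
  have := congrFun h i
  simpa [clVec] using φ.injective (by simpa [clVec] using this)

/-- Base change of a projective point along a field embedding. -/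
def clPt (φ : K →+* L) (P : Projectivization K (Fin n → K)) :
    Projectivization L (Fin n → L) :=
  Projectivization.mk L (clVec φ P.rep) (clVec_ne_zero φ P.rep_nonzero)

lemma eval_smul_of_isHomogeneous {R : Type*} [CommSemiring R] {F : MvPolynomial (Fin n) R}
    {d : ℕ} (hF : F.IsHomogeneous d) (a : R) (w : Fin n → R) :
    eval (a • w) F = a ^ d * eval w F := by
  classical
  rw [eval_eq', eval_eq', Finset.mul_sum]
  refine Finset.sum_congr rfl fun s hs => ?_
  have hdeg : ∑ i, s i = d := by
    have h1 := hF (MvPolynomial.mem_support_iff.mp hs)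
    rw [Finsupp.weight_apply] at h1
    rw [← h1, Finsupp.sum_fintype]
    · simp
    · intro i; simp
  have key : ∀ i : Fin n, (a • w) i ^ s i = a ^ s i * w i ^ s i := by
    intro i; simp [mul_pow]
  rw [Finset.prod_congr rfl (fun i _ => key i), Finset.prod_mul_distrib,
    Finset.prod_pow_eq_pow_sum, hdeg]
  ring

lemma clVec_eval (φ : K →+* L) (F : MvPolynomial (Fin n) K) (v : Fin n → K) :
    eval (clVec φ v) (MvPolynomial.map φ F) = φ (eval v F) := by
  rw [eval_map]
  have h : φ (eval v F) = φ (eval₂Hom (RingHom.id K) v F) := rfl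
  rw [h, map_eval₂Hom]
  rfl

/-- A point given by a vector on which a homogeneous `F` vanishes lies in the zero set. -/
lemma mk_mem_zeroSet {F : MvPolynomial (Fin n) K} {d : ℕ} (hF : F.IsHomogeneous d)
    {v : Fin n → K} (hv : v ≠ 0) (h : eval v F = 0) :
    Projectivization.mk K v hv ∈ zeroSet F := by
  obtain ⟨a, ha⟩ := Projectivization.exists_smul_eq_mk_rep K v hv
  show eval (Projectivization.mk K v hv).rep F = 0
  have hrep : (Projectivization.mk K v hv).rep = (a : K) • v := by
    rw [← ha, Units.smul_def]
  rw [hrep, eval_smul_of_isHomogeneous hF, h, mul_zero]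

lemma clPt_mem_zeroSet (φ : K →+* L) {F : MvPolynomial (Fin n) K} {d : ℕ}
    (hF : F.IsHomogeneous d) {P : Projectivization K (Fin n → K)} (hP : P ∈ zeroSet F) :
    clPt φ P ∈ zeroSet (MvPolynomial.map φ F) := by
  apply mk_mem_zeroSet (hF.map φ)
  rw [clVec_eval, hP, map_zero]

/-- The induced map on points of `S` under base change of the field. -/
def ptMap (φ : K →+* L) {F : MvPolynomial (Fin n) K} {d : ℕ} (hF : F.IsHomogeneous d)
    (P : zeroSet F) : zeroSet (MvPolynomial.map φ F) :=
  ⟨clPt φ P.1, clPt_mem_zeroSet φ hF P.2⟩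

/-- A subspace of `L^n` is defined over `K` (w.r.t. `φ : K →+* L`) if it is spanned by
the base change of a `K`-subspace. -/
def DefinedOver (φ : K →+* L) (W : Submodule L (Fin n → L)) : Prop :=
  ∃ W₀ : Submodule K (Fin n → K), W = Submodule.span L (clVec φ '' (W₀ : Set (Fin n → K)))

/-! ### Asymptotic lines, parabolic points, Eckardt points -/

/-- The line `W` is asymptotic to `F = 0` at `P`: the intersection multiplicity
`(ℓ · S)_P` is at least 3. -/
def AsymptoticAt (F : MvPolynomial (Fin n) K) (W : Submodule K (Fin n → K))
    (P : Projectivization K (Fin n → K)) : Prop :=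
  IsLine W ∧ P.rep ∈ W ∧
    ∃ v ∈ W, LinearIndependent K ![P.rep, v] ∧
      ∃ c : K, lineRestrict F P.rep v = C c * (X 1) ^ 3

/-- The set of asymptotic lines at `P`. -/
def AsymSet (F : MvPolynomial (Fin n) K) (P : Projectivization K (Fin n → K)) :
    Set (Submodule K (Fin n → K)) :=
  {W | AsymptoticAt F W P}

/-- A point of a hypersurface is parabolic (relative to the given field) if it does
not have exactly two distinct asymptotic lines (i.e. it has one or infinitely many). -/
def ParabolicAt (F : MvPolynomial (Fin n) K) (P : Projectivization K (Fin n → K)) : Prop :=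
  ¬ ∃ W₁ W₂ : Submodule K (Fin n → K), W₁ ≠ W₂ ∧ AsymSet F P = {W₁, W₂}

/-- An Eckardt point (relative to the given field): three distinct lines lying on the
surface pass through `P`. -/
def EckardtAt (F : MvPolynomial (Fin n) K) (P : Projectivization K (Fin n → K)) : Prop :=
  ∃ W₁ W₂ W₃ : Submodule K (Fin n → K), W₁ ≠ W₂ ∧ W₁ ≠ W₃ ∧ W₂ ≠ W₃ ∧
    (∀ W ∈ ({W₁, W₂, W₃} : Set (Submodule K (Fin n → K))),
      IsLine W ∧ LineOnSurf F W ∧ OnLine W P)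

section geometric

variable (F : MvPolynomial (Fin n) K)

/-- `F` base changed to the algebraic closure of `K`. -/
def clF : MvPolynomial (Fin n) (AlgebraicClosure K) :=
  MvPolynomial.map (algebraMap K (AlgebraicClosure K)) F

/-- A `K`-point of `S` is parabolic (a geometric notion, checked over `K̄`). -/
def IsParabolic (P : Projectivization K (Fin n → K)) : Prop :=
  ParabolicAt (clF F) (clPt (algebraMap K (AlgebraicClosure K)) P)

/-- A `K`-point of `S` is an Eckardt point (a geometric notion, checked over `K̄`). -/
def IsEckardt (P : Projectivization K (Fin n → K)) : Prop :=
  EckardtAt (clF F) (clPt (algebraMap K (AlgebraicClosure K)) P)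

/-- A `K`-point of `S` is `K`-hyperbolic: it has exactly two asymptotic lines over `K̄`,
and both are defined over `K`. -/
def IsHyperbolic (P : Projectivization K (Fin n → K)) : Prop :=
  ∃ W₁ W₂, W₁ ≠ W₂ ∧
    AsymSet (clF F) (clPt (algebraMap K (AlgebraicClosure K)) P) = {W₁, W₂} ∧
    DefinedOver (algebraMap K (AlgebraicClosure K)) W₁ ∧
    DefinedOver (algebraMap K (AlgebraicClosure K)) W₂

/-- A `K`-point of `S` is `K`-ternary: at least one of the asymptotic lines of `S`
through `P` is defined over `K`. -/
def IsTernary (P : Projectivization K (Fin n → K)) : Prop :=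
  ∃ W ∈ AsymSet (clF F) (clPt (algebraMap K (AlgebraicClosure K)) P),
    DefinedOver (algebraMap K (AlgebraicClosure K)) W

end geometric

/-! ### The group `H_S(K)` -/

variable (F : MvPolynomial (Fin n) K)

/-- `G_S(K)`: the free abelian group on the set `S(K)`. -/
abbrev GS := FreeAbelianGroup (zeroSet F)

/-- The degree homomorphism `G_S(K) → ℤ`, `Σ aᵢ Pᵢ ↦ Σ aᵢ`. -/
def degHom : GS F →+ ℤ := FreeAbelianGroup.lift fun _ => (1 : ℤ)

/-- `P + Q + R` is a "three point sum": either cut out on `S` with multiplicity by a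
`K`-line not contained in `S`, or `P`, `Q`, `R` all lie on a `K`-line contained in `S`. -/
def TripleRel (P Q R : zeroSet F) : Prop :=
  ∃ W : Submodule K (Fin n → K), IsLine W ∧
    ((¬ LineOnSurf F W ∧ MeetsIn F W P.1 Q.1 R.1) ∨
      (LineOnSurf F W ∧ OnLine W P.1 ∧ OnLine W Q.1 ∧ OnLine W R.1))

/-- `G'_S(K)`: the subgroup generated by all three point sums. -/
def Gp : AddSubgroup (GS F) :=
  AddSubgroup.closure {x | ∃ P Q R : zeroSet F, TripleRel F P Q R ∧
    x = FreeAbelianGroup.of P + FreeAbelianGroup.of Q + FreeAbelianGroup.of R}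

/-- `G''_S(K)`: the degree-0 part of `G'_S(K)`. -/
def Gpp : AddSubgroup (GS F) := Gp F ⊓ (degHom F).ker

/-- `H_S(K) = G_S(K)/G''_S(K)`. -/
abbrev HS := GS F ⧸ Gpp F

/-- The class `[P] ∈ H_S(K)` of a point `P ∈ S(K)`. -/
def HClass (P : zeroSet F) : HS F := QuotientAddGroup.mk' (Gpp F) (FreeAbelianGroup.of P)

/-- The degree homomorphism `H_S(K) → ℤ`. -/
def HdegHom : HS F →+ ℤ :=
  QuotientAddGroup.lift (Gpp F) (degHom F) (fun _ hx => hx.2)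

/-- `H⁰_S(K)`: the degree-0 part of `H_S(K)`. -/
def H0 : AddSubgroup (HS F) := (HdegHom F).ker

@[simp] lemma HdegHom_HClass (P : zeroSet F) : HdegHom F (HClass F P) = 1 := by
  simp [HdegHom, HClass, degHom]

/-- The class `[P] - [Q]`, as an element of `H⁰_S(K)`. -/
def H0diff (P Q : zeroSet F) : H0 F :=
  ⟨HClass F P - HClass F Q, by simp [H0, AddMonoidHom.mem_ker, map_sub]⟩

/-! ### mod-`p` dimensions and torsion -/

/-- `A/pA` for an abelian group `A`. -/
abbrev ModP (p : ℕ) (A : Type*) [AddCommGroup A] : Type _ :=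
  A ⧸ (AddMonoidHom.range (nsmulAddMonoidHom p : A →+ A))

instance ModP.instModule (p : ℕ) (A : Type*) [AddCommGroup A] : Module (ZMod p) (ModP p A) :=
  QuotientAddGroup.zmodModule (fun x => ⟨x, rfl⟩)

/-- `dim_{F_p} A/pA`. -/
def dimModP (p : ℕ) (A : Type*) [AddCommGroup A] : Cardinal := Module.rank (ZMod p) (ModP p A)

/-- The `k`-torsion subgroup `A[k]` of an abelian group `A`. -/
def torsion (k : ℕ) (A : Type*) [AddCommGroup A] : AddSubgroup A :=
  (nsmulAddMonoidHom k : A →+ A).ker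

instance torsion.instModule (k : ℕ) (A : Type*) [AddCommGroup A] :
    Module (ZMod k) (torsion k A) :=
  AddCommGroup.zmodModule (fun x => Subtype.ext x.2)

/-- `dim_{F_k} A[k]`: the dimension of the `k`-torsion subgroup (for `k` prime). -/
def dimTorsion (k : ℕ) (A : Type*) [AddCommGroup A] : Cardinal :=
  Module.rank (ZMod k) (torsion k A)

/-! ### Topologies -/

/-- The quotient topology on projective space induced by the topology of `K`. -/
def projTop (K : Type*) [Field K] [TopologicalSpace K] (n : ℕ) :
    TopologicalSpace (Projectivization K (Fin n → K)) :=
  TopologicalSpace.coinduced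
    (fun v : {v : Fin n → K // v ≠ 0} => Projectivization.mk K v.1 v.2) inferInstance

/-- The induced topology on the set of `K`-points of `S`. -/
def surfTop (F : MvPolynomial (Fin n) K) [TopologicalSpace K] :
    TopologicalSpace (zeroSet F) :=
  TopologicalSpace.induced Subtype.val (projTop K n)

/-- `K` (a topological field) is a local field: it is isomorphic, as a topological field,
to `ℝ`, to `ℂ`, or to a finite extension of `ℚ_p` for some prime `p` (with its canonical
topology, namely the `ℚ_p`-vector space topology). -/
def IsLocalField (K : Type*) [Field K] [TopologicalSpace K] : Prop :=
  (∃ e : K ≃+* ℝ, IsHomeomorph e) ∨ (∃ e : K ≃+* ℂ, IsHomeomorph e) ∨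
    (∃ (p : ℕ), p.Prime ∧ ∃ (_ : Fact p.Prime) (f : ℚ_[p] →+* K) (m : ℕ)
      (e : K ≃+ (Fin m → ℚ_[p])),
      (∀ (c : ℚ_[p]) (x : K), e (f c * x) = c • e x) ∧ IsHomeomorph e)

end CubicSurf

/-! The key point is that through every `P ∈ S` off the line `ℓ ⊂ S` there is a line tangent to `S`
at `P` and meeting `ℓ`: the tangent plane `Π_P` meets `ℓ` in some `K`-point `Q`, and the line `PQ`
either lies on `S` or cuts out the divisor `2P + Q`. In both cases `2P + Q` is a three point sum.
For any fixed `O ∈ ℓ` the line `ℓ` itself gives the three point sum `2O + Q`, so `2[P] = 2[O]` does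
not depend on `P`. As the classes of points generate `H_S(K)`, this means `2x = deg(x) · 2[O]` for
all `x`, and `2x` vanishes exactly when `deg x` does, since `ℤ` is torsion-free. -/

namespace CubicSurf

lemma binaryCubic_eq_of_double_zero_of_zero {R : Type*} [CommSemiring R]
    {g : MvPolynomial (Fin 2) R} (hg : g.IsHomogeneous 3) (h₁₀ : eval ![1, 0] g = 0)
    (h₁₀' : eval ![1, 0] (pderiv 1 g) = 0) (h₀₁ : eval ![0, 1] g = 0) :
    ∃ c : R, g = C c * (X 0 * X 1 ^ 2) := by
  obtain ⟨q, rfl⟩ : ∃ q : Polynomial R, q.homogenize 3 = g :=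
    ⟨_, Polynomial.homogenize_eq_of_isHomogeneous hg rfl⟩
  have expand : q.homogenize 3 = C (q.coeff 0) * X 1 ^ 3 + C (q.coeff 1) * (X 0 * X 1 ^ 2) +
      C (q.coeff 2) * (X 0 ^ 2 * X 1) + C (q.coeff 3) * X 0 ^ 3 := by
    rw [Polynomial.homogenize, Finset.Nat.sum_antidiagonal_eq_sum_range_succ_mk]
    simp [Finset.sum_range_succ, monomial_eq, Finsupp.prod_fintype]
  rw [expand] at h₁₀ h₁₀' h₀₁
  have h₀ : q.coeff 0 = 0 := by simpa using h₀₁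
  have h₂ : q.coeff 2 = 0 := by simpa [pderiv_mul, pderiv_pow, pderiv_X] using h₁₀'
  have h₃ : q.coeff 3 = 0 := by simpa using h₁₀
  exact ⟨q.coeff 1, by simp [expand, h₀, h₂, h₃]⟩

lemma derivation_aeval {R A M σ : Type*} [CommSemiring R] [CommSemiring A] [Algebra R A]
    [AddCommMonoid M] [Module R M] [Module A M] [Fintype σ]
    (D : Derivation R A M) (g : σ → A) (p : MvPolynomial σ R) :
    D (aeval g p) = ∑ i, aeval g (pderiv i p) • D (g i) := by
  classical
  induction p using MvPolynomial.induction_on with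
  | C a => simp
  | add p q hp hq => simp only [map_add, add_smul, Finset.sum_add_distrib, hp, hq]
  | mul_X p i hp =>
    simp [hp, pderiv_X, Pi.single_apply, apply_ite, ite_smul, add_smul, mul_smul,
      Finset.sum_add_distrib, Finset.smul_sum]

variable {K : Type*} [Field K] {n : ℕ}

lemma eval_lineRestrict (F : MvPolynomial (Fin n) K) (u v : Fin n → K) (z : Fin 2 → K) :
    eval z (lineRestrict F u v) = eval (z 0 • u + z 1 • v) F := by
  rw [lineRestrict, ← coe_aeval_eq_eval, RingHom.coe_coe, comp_aeval_apply, ← coe_aeval_eq_eval]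
  simp [Pi.add_def, mul_comm]

lemma pderiv_one_lineRestrict (F : MvPolynomial (Fin n) K) (u v : Fin n → K) :
    pderiv 1 (lineRestrict F u v) = ∑ i, C (v i) * lineRestrict (pderiv i F) u v := by
  rw [lineRestrict, derivation_aeval]
  simp [lineRestrict, pderiv_X, mul_comm]

lemma lineRestrict_linearCombination (F : MvPolynomial (Fin n) K) (u v : Fin n → K)
    (a b c d : K) :
    lineRestrict F (a • u + b • v) (c • u + d • v) =
      aeval ![C a * X 0 + C c * X 1, C b * X 0 + C d * X 1] (lineRestrict F u v) := by
  rw [lineRestrict, lineRestrict, comp_aeval_apply]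
  congr 2
  ext1 i
  simp only [Pi.add_apply, Pi.smul_apply, smul_eq_mul, map_add, map_mul, algHom_C, algebraMap_eq,
    aeval_X, Matrix.cons_val]
  ring

variable {F : MvPolynomial (Fin n) K} {W : Submodule K (Fin n → K)}

lemma lineRestrict_isHomogeneous {d : ℕ} (hF : F.IsHomogeneous d) (u v : Fin n → K) :
    (lineRestrict F u v).IsHomogeneous d := by
  simpa [lineRestrict] using hF.aeval (n := 1) _ fun i =>
    (isHomogeneous_C_mul_X (u i) 0).add (isHomogeneous_C_mul_X (v i) 1)

lemma lineOnSurf_span_pair_of_lineRestrict_eq_zero {u v : Fin n → K}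
    (h : lineRestrict F u v = 0) : LineOnSurf F (Submodule.span K {u, v}) := by
  intro x y hx hy
  obtain ⟨a, b, rfl⟩ := Submodule.mem_span_pair.1 hx
  obtain ⟨c, d, rfl⟩ := Submodule.mem_span_pair.1 hy
  rw [lineRestrict_linearCombination, h, map_zero]

lemma LineOnSurf.mem_zeroSet (hW : LineOnSurf F W) {P : Projectivization K (Fin n → K)}
    (hP : OnLine W P) : P ∈ zeroSet F := by
  simpa [zeroSet, hW _ _ hP hP] using (eval_lineRestrict F P.rep P.rep ![1, 0]).symm

lemma isLine_span_pair {u v : Fin n → K} (h : LinearIndependent K ![u, v]) :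
    IsLine (Submodule.span K {u, v}) := by
  rw [IsLine, ← Matrix.range_cons_cons_empty u v ![], finrank_span_eq_card h, Fintype.card_fin]

lemma IsLine.exists_onLine_apply_rep_eq_zero (hW : IsLine W) (f : (Fin n → K) →ₗ[K] K) :
    ∃ Q : Projectivization K (Fin n → K), OnLine W Q ∧ f Q.rep = 0 := by
  have hker : LinearMap.ker (f ∘ₗ W.subtype) ≠ ⊥ :=
    LinearMap.ker_ne_bot_of_finrank_lt (by rw [Module.finrank_self, hW]; exact one_lt_two)
  obtain ⟨⟨w, hwW⟩, hfw, hw⟩ := (Submodule.ne_bot_iff _).1 hker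
  have hw₀ : w ≠ 0 := fun h => hw (Subtype.ext h)
  obtain ⟨a, ha⟩ := Projectivization.exists_smul_eq_mk_rep K w hw₀
  refine ⟨Projectivization.mk K w hw₀, ?_, ?_⟩
  · rw [OnLine, ← ha]
    exact W.smul_mem _ hwW
  · rw [← ha, Units.smul_def, map_smul, show f w = 0 from hfw, smul_zero]

lemma eval_pderiv_one_lineRestrict_rep (P Q : Projectivization K (Fin n → K)) :
    eval ![1, 0] (pderiv 1 (lineRestrict F P.rep Q.rep)) = tangentEval F P Q := by
  simp [pderiv_one_lineRestrict, eval_lineRestrict, tangentEval, mul_comm]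

lemma meetsIn_span_pair_of_lineRestrict_eq {P Q : Projectivization K (Fin n → K)} (hPQ : P ≠ Q)
    {c : K} (hc : c ≠ 0) (h : lineRestrict F P.rep Q.rep = C c * (X 0 * X 1 ^ 2)) :
    MeetsIn F (Submodule.span K {P.rep, Q.rep}) P P Q := by
  refine ⟨P.rep, Q.rep, Submodule.mem_span_pair.2 ⟨1, 0, by simp⟩,
    Submodule.mem_span_pair.2 ⟨0, 1, by simp⟩,
    Projectivization.linearIndependent_pair_iff_ne.2 hPQ, c, ![1, 1, 0], ![0, 0, 1], ?_, hc, ?_⟩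
  · intro k
    fin_cases k <;> simp [Projectivization.rep_nonzero]
  · simp only [h, Fin.prod_univ_three, Matrix.cons_val, map_zero, map_one, Projectivization.mk_rep,
      one_smul, zero_smul, add_zero, zero_add, and_self, and_true]
    ring

lemma tripleRel_of_mem_GammaPts (hF : F.IsHomogeneous 3) {P Q : zeroSet F} (hPQ : P ≠ Q)
    (hQ : Q.1 ∈ GammaPts F P.1) : TripleRel F P P Q := by
  have hP : eval P.1.rep F = 0 := P.2
  have hQ₀ : eval Q.1.rep F = 0 := Q.2
  have hPQ' : P.1 ≠ Q.1 := Subtype.coe_injective.ne hPQ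
  obtain ⟨c, hc⟩ : ∃ c : K, lineRestrict F P.1.rep Q.1.rep = C c * (X 0 * X 1 ^ 2) :=
    binaryCubic_eq_of_double_zero_of_zero (lineRestrict_isHomogeneous hF _ _)
      (by simpa [eval_lineRestrict] using hP)
      (by rw [eval_pderiv_one_lineRestrict_rep]; exact hQ.2)
      (by simpa [eval_lineRestrict] using hQ₀)
  refine ⟨Submodule.span K {P.1.rep, Q.1.rep},
    isLine_span_pair (Projectivization.linearIndependent_pair_iff_ne.2 hPQ'), ?_⟩
  by_cases hline : LineOnSurf F (Submodule.span K {P.1.rep, Q.1.rep})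
  · exact Or.inr ⟨hline, Submodule.mem_span_pair.2 ⟨1, 0, by simp⟩,
      Submodule.mem_span_pair.2 ⟨1, 0, by simp⟩, Submodule.mem_span_pair.2 ⟨0, 1, by simp⟩⟩
  · refine Or.inl ⟨hline, meetsIn_span_pair_of_lineRestrict_eq hPQ' ?_ hc⟩
    rintro rfl
    exact hline (lineOnSurf_span_pair_of_lineRestrict_eq_zero (by simpa using hc))

lemma IsLine.exists_onLine_mem_tangentPlanePts (hW : IsLine W)
    (P : Projectivization K (Fin n → K)) :
    ∃ Q : Projectivization K (Fin n → K), OnLine W Q ∧ Q ∈ tangentPlanePts F P := by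
  simpa [tangentPlanePts, tangentEval, Fintype.linearCombination_apply, mul_comm] using
    hW.exists_onLine_apply_rep_eq_zero
      (Fintype.linearCombination K fun i => eval P.rep (pderiv i F))

lemma exists_onLine_tripleRel (hF : F.IsHomogeneous 3) (hW : IsLine W)
    (hS : LineOnSurf F W) (P : zeroSet F) :
    ∃ Q : zeroSet F, OnLine W Q.1 ∧ TripleRel F P P Q := by
  obtain ⟨Q, hQW, hQP⟩ := hW.exists_onLine_mem_tangentPlanePts (F := F) P.1
  have hQ : Q ∈ zeroSet F := hS.mem_zeroSet hQW
  refine ⟨⟨Q, hQ⟩, hQW, ?_⟩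
  by_cases hPQ : P = ⟨Q, hQ⟩
  · have hPW : OnLine W P.1 := hPQ ▸ hQW
    exact ⟨W, hW, Or.inr ⟨hS, hPW, hPW, hQW⟩⟩
  · exact tripleRel_of_mem_GammaPts hF hPQ ⟨hQ, hQP⟩

lemma TripleRel.hClass_add_eq {P Q R P' Q' R' : zeroSet F} (h : TripleRel F P Q R)
    (h' : TripleRel F P' Q' R') :
    HClass F P + HClass F Q + HClass F R = HClass F P' + HClass F Q' + HClass F R' := by
  refine QuotientAddGroup.eq_iff_sub_mem.2 ⟨(Gp F).sub_mem ?_ ?_, ?_⟩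
  · exact AddSubgroup.subset_closure ⟨P, Q, R, h, rfl⟩
  · exact AddSubgroup.subset_closure ⟨P', Q', R', h', rfl⟩
  · simp [degHom]

lemma two_nsmul_hClass_eq_of_onLine (hF : F.IsHomogeneous 3) (hW : IsLine W)
    (hS : LineOnSurf F W) (P : zeroSet F) {O : zeroSet F} (hO : OnLine W O.1) :
    2 • HClass F P = 2 • HClass F O := by
  obtain ⟨Q, hQ, hPQ⟩ := exists_onLine_tripleRel hF hW hS P
  have hOQ : TripleRel F O O Q := ⟨W, hW, Or.inr ⟨hS, hO, hO, hQ⟩⟩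
  simpa only [two_nsmul, add_left_inj] using hPQ.hClass_add_eq hOQ

lemma HS_addMonoidHom_ext {A : Type*} [AddCommGroup A] {f g : HS F →+ A}
    (h : ∀ P, f (HClass F P) = g (HClass F P)) : f = g :=
  QuotientAddGroup.addMonoidHom_ext _ (FreeAbelianGroup.lift_ext _ _ h)

lemma nsmul_eq_HdegHom_zsmul {k : ℕ} {a : HS F} (h : ∀ P, k • HClass F P = a) (x : HS F) :
    k • x = HdegHom F x • a := by
  have hom_eq : nsmulAddMonoidHom k = ((zmultiplesHom (HS F)) a).comp (HdegHom F) :=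
    HS_addMonoidHom_ext fun P => by simp [h]
  exact DFunLike.congr_fun hom_eq x

lemma torsion_le_H0 {k : ℕ} (hk : k ≠ 0) : torsion k (HS F) ≤ H0 F := by
  intro x (hx : k • x = 0)
  have hdeg : k • HdegHom F x = 0 := by rw [← map_nsmul, hx, map_zero]
  exact (smul_eq_zero.1 hdeg).resolve_left hk

lemma H0_eq_torsion_of_forall_nsmul_hClass_eq {k : ℕ} (hk : k ≠ 0) {a : HS F}
    (h : ∀ P, k • HClass F P = a) : H0 F = torsion k (HS F) := by
  refine le_antisymm (fun x (hx : HdegHom F x = 0) => ?_) (torsion_le_H0 hk)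
  change k • x = 0
  rw [nsmul_eq_HdegHom_zsmul h, hx, zero_smul]

end CubicSurf

open CubicSurf MvPolynomial in
theorem H0_eq_two_torsion_of_line_general {K : Type*} [Field K] {n : ℕ}
    {F : MvPolynomial (Fin n) K} (hF : F.IsHomogeneous 3)
    {W : Submodule K (Fin n → K)} (hl : IsLine W) (hS : LineOnSurf F W) :
    H0 F = torsion 2 (HS F) := by
  obtain ⟨O, hO, -⟩ := hl.exists_onLine_apply_rep_eq_zero 0
  exact H0_eq_torsion_of_forall_nsmul_hClass_eq two_ne_zero fun P =>
    two_nsmul_hClass_eq_of_onLine hF hl hS P (O := ⟨O, hS.mem_zeroSet hO⟩) hO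

open CubicSurf MvPolynomial in
/-- Let `S` be a smooth cubic surface over a field `K` containing a
`K`-rational line. Then `H⁰_S(K) = H_S(K)[2]`, the 2-torsion subgroup of `H_S(K)`. -/
theorem H0_eq_two_torsion_of_line
    {K : Type*} [Field K]
    (F : MvPolynomial (Fin 4) K) (hF : SmoothCubic F)
    (W : Submodule K (Fin 4 → K)) (hl : IsLine W) (hS : LineOnSurf F W) :
    H0 F = torsion 2 (HS F) :=
  H0_eq_two_torsion_of_line_general hF.1 hl hS
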